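/- For a fixed invertible n×n complex matrix B and −1 ≤ p < 0, the map A ↦ tr((B* A^p B)^{1/p}) is concave on positive definite n×n matrices. -/

import Mathlib

open Matrix ComplexOrder

/-- Functional calculus for Hermitian matrices: apply `f` to the eigenvalues. -/
noncomputable def mfun {m : Type*} [Fintype m] [DecidableEq m] (f : ℝ → ℝ)
    (A : Matrix m m ℂ) : Matrix m m ℂ :=
  if hA : A.IsHermitian then
    (hA.eigenvectorUnitary : Matrix m m ℂ) *
      Matrix.diagonal (fun i => (f (hA.eigenvalues i) : ℂ)) *
      (star (hA.eigenvectorUnitary : Matrix m m ℂ))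
  else 0

/-- Real matrix power via the functional calculus. -/
noncomputable def mpow {m : Type*} [Fintype m] [DecidableEq m]
    (A : Matrix m m ℂ) (p : ℝ) : Matrix m m ℂ :=
  mfun (fun x => x ^ p) A

lemma mfun_eq_cfc {n : ℕ} (f : ℝ → ℝ) (A : Matrix (Fin n) (Fin n) ℂ) (hA : A.IsHermitian) :
    mfun f A = cfc f A := by
  rw [hA.cfc_eq f, mfun, dif_pos hA, Matrix.IsHermitian.cfc, Unitary.conjStarAlgAut_apply]
  rfl

lemma contOn_spec {n : ℕ} (f : ℝ → ℝ) (A : Matrix (Fin n) (Fin n) ℂ) (hA : A.IsHermitian) :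
    ContinuousOn f (spectrum ℝ A) := by
  have h : (spectrum ℝ A).Finite := by
    rw [hA.spectrum_real_eq_range_eigenvalues]; exact Set.finite_range _
  exact h.continuousOn f

lemma contOn_spec_image {n : ℕ} (f g : ℝ → ℝ) (A : Matrix (Fin n) (Fin n) ℂ)
    (hA : A.IsHermitian) :
    ContinuousOn f (g '' spectrum ℝ A) := by
  have h : (spectrum ℝ A).Finite := by
    rw [hA.spectrum_real_eq_range_eigenvalues]; exact Set.finite_range _
  exact (h.image g).continuousOn f

lemma spec_pos {n : ℕ} {A : Matrix (Fin n) (Fin n) ℂ} (hA : A.PosDef) {x : ℝ}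
    (hx : x ∈ spectrum ℝ A) : 0 < x := by
  rw [hA.1.spectrum_real_eq_range_eigenvalues] at hx
  obtain ⟨i, rfl⟩ := hx
  exact hA.eigenvalues_pos i

lemma mpow_posDef {n : ℕ} {A : Matrix (Fin n) (Fin n) ℂ} (hA : A.PosDef) (p : ℝ) :
    (mpow A p).PosDef := by
  rw [mpow, mfun, dif_pos hA.1]
  refine Matrix.PosDef.mul_mul_conjTranspose_same ?_ ?_
  · rw [Matrix.posDef_diagonal_iff]
    intro i
    have := Real.rpow_pos_of_pos (hA.eigenvalues_pos i) p
    exact_mod_cast this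
  · apply Matrix.vecMul_injective_of_isUnit
    exact (Unitary.toUnits hA.1.eigenvectorUnitary).isUnit

lemma mpow_mul {n : ℕ} {A : Matrix (Fin n) (Fin n) ℂ} (hA : A.PosDef) (p q : ℝ) :
    mpow A p * mpow A q = mpow A (p + q) := by
  rw [mpow, mpow, mpow, mfun_eq_cfc _ _ hA.1, mfun_eq_cfc _ _ hA.1, mfun_eq_cfc _ _ hA.1,
    ← cfc_mul _ _ A (contOn_spec _ _ hA.1) (contOn_spec _ _ hA.1)]
  apply cfc_congr
  intro x hx
  exact (Real.rpow_add (spec_pos hA hx) p q).symm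

lemma mpow_mpow {n : ℕ} {A : Matrix (Fin n) (Fin n) ℂ} (hA : A.PosDef) (p q : ℝ) :
    mpow (mpow A p) q = mpow A (p * q) := by
  have h := (mpow_posDef hA p).1
  rw [mpow, mfun_eq_cfc _ _ h, mpow, mpow, mfun_eq_cfc _ _ hA.1, mfun_eq_cfc _ _ hA.1,
    ← cfc_comp (fun x : ℝ => x ^ q) (fun x : ℝ => x ^ p) A hA.1.isSelfAdjoint (contOn_spec_image _ _ _ hA.1)
      (contOn_spec _ _ hA.1)]
  apply cfc_congr
  intro x hx
  exact (Real.rpow_mul (spec_pos hA hx).le p q).symm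

lemma mfun_one {n : ℕ} {A : Matrix (Fin n) (Fin n) ℂ} (hA : A.IsHermitian) :
    mfun (fun _ => 1) A = 1 := by
  rw [mfun_eq_cfc _ _ hA]
  exact cfc_const_one ℝ A hA

lemma mfun_id {n : ℕ} {A : Matrix (Fin n) (Fin n) ℂ} (hA : A.IsHermitian) :
    mfun (fun x => x) A = A := by
  rw [mfun_eq_cfc _ _ hA]
  exact cfc_id' ℝ A hA

lemma mpow_zero' {n : ℕ} {A : Matrix (Fin n) (Fin n) ℂ} (hA : A.IsHermitian) :
    mpow A 0 = 1 := by
  simp only [mpow, Real.rpow_zero]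
  exact mfun_one hA

lemma mpow_one' {n : ℕ} {A : Matrix (Fin n) (Fin n) ℂ} (hA : A.IsHermitian) :
    mpow A 1 = A := by
  simp only [mpow, Real.rpow_one]
  exact mfun_id hA

/-- entries of `C` in the eigenbases. -/
noncomputable def tw {n : ℕ} {A Z : Matrix (Fin n) (Fin n) ℂ} (hA : A.IsHermitian)
    (hZ : Z.IsHermitian) (C : Matrix (Fin n) (Fin n) ℂ) : Matrix (Fin n) (Fin n) ℂ :=
  star (hA.eigenvectorUnitary : Matrix (Fin n) (Fin n) ℂ) * C *
    (hZ.eigenvectorUnitary : Matrix (Fin n) (Fin n) ℂ)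

lemma trace_formula {n : ℕ} {A Z : Matrix (Fin n) (Fin n) ℂ} (hA : A.IsHermitian)
    (hZ : Z.IsHermitian) (C : Matrix (Fin n) (Fin n) ℂ) (f g : ℝ → ℝ) :
    (Cᴴ * mfun f A * C * mfun g Z).trace.re =
      ∑ i, ∑ j, f (hA.eigenvalues i) * g (hZ.eigenvalues j) * Complex.normSq (tw hA hZ C i j) := by
  have h : (Cᴴ * mfun f A * C * mfun g Z).trace =
      ((tw hA hZ C)ᴴ * Matrix.diagonal (fun i => (f (hA.eigenvalues i) : ℂ)) * tw hA hZ C *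
        Matrix.diagonal (fun i => (g (hZ.eigenvalues i) : ℂ))).trace := by
    rw [mfun, mfun, dif_pos hA, dif_pos hZ, tw]
    simp only [Matrix.conjTranspose_mul, Matrix.star_eq_conjTranspose,
      Matrix.conjTranspose_conjTranspose, ← Matrix.mul_assoc]
    rw [Matrix.trace_mul_comm]
    simp only [← Matrix.mul_assoc]
  rw [h, Matrix.trace, Finset.sum_comm, Complex.re_sum]
  refine Finset.sum_congr rfl fun j _ => ?_
  rw [Matrix.diag_apply, Matrix.mul_diagonal, Matrix.mul_apply, Finset.sum_mul, Complex.re_sum]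
  refine Finset.sum_congr rfl fun i _ => ?_
  rw [Matrix.mul_diagonal, Matrix.conjTranspose_apply]
  simp [Complex.normSq_apply]
  ring

/-- Trace Young inequality. -/
lemma trace_young {n : ℕ} {X Z : Matrix (Fin n) (Fin n) ℂ} (hX : X.PosDef)
    (hZ : Z.PosDef) (p : ℝ) (hp0 : -1 ≤ p) (hp1 : p < 0) :
    (mpow X (-1) * mpow Z (1 + p)).trace.re ≤
      (-p) * (mpow X (1 / p)).trace.re + (1 + p) * Z.trace.re := by
  have e1 := trace_formula hX.1 hZ.1 1 (fun x => x ^ (-1 : ℝ)) (fun x => x ^ (1 + p))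
  have e2 := trace_formula hX.1 hZ.1 1 (fun x => x ^ (1 / p)) (fun _ => 1)
  have e3 := trace_formula hX.1 hZ.1 1 (fun _ => 1) (fun x => x)
  rw [mfun_one hZ.1] at e2
  rw [mfun_one hX.1, mfun_id hZ.1] at e3
  simp only [Matrix.conjTranspose_one, Matrix.one_mul, Matrix.mul_one] at e1 e2 e3
  rw [mpow, mpow, mpow, e1, e2, e3, Finset.mul_sum, Finset.mul_sum, ← Finset.sum_add_distrib]
  refine Finset.sum_le_sum fun i _ => ?_
  rw [Finset.mul_sum, Finset.mul_sum, ← Finset.sum_add_distrib]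
  refine Finset.sum_le_sum fun j _ => ?_
  have hx := hX.eigenvalues_pos i
  have hz := hZ.eigenvalues_pos j
  generalize hX.1.eigenvalues i = x at *
  generalize hZ.1.eigenvalues j = z at *
  have hy := Real.geom_mean_le_arith_mean2_weighted (w₁ := -p) (w₂ := 1 + p) (p₁ := x ^ (1 / p))
    (p₂ := z) (by linarith) (by linarith) (by positivity) hz.le (by ring)
  rw [← Real.rpow_mul hx.le, show 1 / p * -p = -1 by
    have := hp1.ne; field_simp] at hy
  have := mul_le_mul_of_nonneg_right hy (Complex.normSq_nonneg (tw hX.1 hZ.1 1 i j))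
  linarith


lemma tw_sub {n : ℕ} {A Z : Matrix (Fin n) (Fin n) ℂ} (hA : A.IsHermitian)
    (hZ : Z.IsHermitian) (C D : Matrix (Fin n) (Fin n) ℂ) :
    tw hA hZ (C - D) = tw hA hZ C - tw hA hZ D := by
  simp only [tw, Matrix.mul_sub, Matrix.sub_mul]

lemma tw_surj {n : ℕ} {A Z : Matrix (Fin n) (Fin n) ℂ} (hA : A.IsHermitian)
    (hZ : Z.IsHermitian) (E : Matrix (Fin n) (Fin n) ℂ) : ∃ D, tw hA hZ D = E := by
  refine ⟨(hA.eigenvectorUnitary : Matrix (Fin n) (Fin n) ℂ) * E *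
    star (hZ.eigenvectorUnitary : Matrix (Fin n) (Fin n) ℂ), ?_⟩
  have h1 := Unitary.coe_star_mul_self hA.eigenvectorUnitary
  have h2 := Unitary.coe_star_mul_self hZ.eigenvectorUnitary
  rw [tw]
  simp only [Matrix.mul_assoc]
  rw [h2, ← Matrix.mul_assoc, h1]
  simp

/-- quadratic form whose infimum over `D` is the parallel sum. -/
noncomputable def qf {n : ℕ} (l : ℝ) (C D A Z : Matrix (Fin n) (Fin n) ℂ) : ℝ :=
  (Dᴴ * A * D).trace.re + l * ((C - D)ᴴ * (C - D) * Z).trace.re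

lemma qf_eq {n : ℕ} {A Z : Matrix (Fin n) (Fin n) ℂ} (hA : A.IsHermitian)
    (hZ : Z.IsHermitian) (l : ℝ) (C D : Matrix (Fin n) (Fin n) ℂ) :
    qf l C D A Z = ∑ i, ∑ j, (hA.eigenvalues i * Complex.normSq (tw hA hZ D i j) +
      l * hZ.eigenvalues j * Complex.normSq (tw hA hZ C i j - tw hA hZ D i j)) := by
  have e1 := trace_formula hA hZ D (fun x => x) (fun _ => 1)
  have e2 := trace_formula hA hZ (C - D) (fun _ => 1) (fun x => x)
  rw [mfun_one hZ, mfun_id hA] at e1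
  rw [mfun_one hA, mfun_id hZ] at e2
  simp only [mul_one, one_mul, tw_sub, Matrix.sub_apply] at e1 e2
  rw [qf, e1, e2, Finset.mul_sum, ← Finset.sum_add_distrib]
  refine Finset.sum_congr rfl fun i _ => ?_
  rw [Finset.mul_sum, ← Finset.sum_add_distrib]
  refine Finset.sum_congr rfl fun j _ => ?_
  ring

/-- The parallel sum form. -/
noncomputable def ps {n : ℕ} {A Z : Matrix (Fin n) (Fin n) ℂ} (hA : A.IsHermitian)
    (hZ : Z.IsHermitian) (l : ℝ) (C : Matrix (Fin n) (Fin n) ℂ) : ℝ :=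
  ∑ i, ∑ j, hA.eigenvalues i * (l * hZ.eigenvalues j) /
    (hA.eigenvalues i + l * hZ.eigenvalues j) * Complex.normSq (tw hA hZ C i j)

lemma ps_le {n : ℕ} {A Z : Matrix (Fin n) (Fin n) ℂ} (hA : A.PosDef)
    (hZ : Z.PosDef) {l : ℝ} (hl : 0 < l) (C D : Matrix (Fin n) (Fin n) ℂ) :
    ps hA.1 hZ.1 l C ≤ qf l C D A Z := by
  rw [qf_eq hA.1 hZ.1, ps]
  refine Finset.sum_le_sum fun i _ => Finset.sum_le_sum fun j _ => ?_
  have ha := hA.eigenvalues_pos i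
  have hz := mul_pos hl (hZ.eigenvalues_pos j)
  generalize hA.1.eigenvalues i = a at *
  generalize l * hZ.1.eigenvalues j = b at *
  generalize tw hA.1 hZ.1 C i j = c
  generalize tw hA.1 hZ.1 D i j = d
  have hab : 0 < a + b := by linarith
  rw [div_mul_eq_mul_div, div_le_iff₀ hab]
  simp only [Complex.normSq_apply, Complex.sub_re, Complex.sub_im]
  nlinarith [sq_nonneg (a * d.re - b * (c.re - d.re)), sq_nonneg (a * d.im - b * (c.im - d.im))]

lemma ps_attained {n : ℕ} {A Z : Matrix (Fin n) (Fin n) ℂ} (hA : A.PosDef)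
    (hZ : Z.PosDef) {l : ℝ} (hl : 0 < l) (C : Matrix (Fin n) (Fin n) ℂ) :
    ∃ D, ps hA.1 hZ.1 l C = qf l C D A Z := by
  obtain ⟨D, hD⟩ := tw_surj hA.1 hZ.1 (Matrix.of fun i j =>
    ((l * hZ.1.eigenvalues j / (hA.1.eigenvalues i + l * hZ.1.eigenvalues j) : ℝ) : ℂ) *
      tw hA.1 hZ.1 C i j)
  refine ⟨D, ?_⟩
  rw [qf_eq hA.1 hZ.1, ps]
  refine Finset.sum_congr rfl fun i _ => Finset.sum_congr rfl fun j _ => ?_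
  rw [hD, Matrix.of_apply]
  have ha := hA.eigenvalues_pos i
  have hz := mul_pos hl (hZ.eigenvalues_pos j)
  generalize hA.1.eigenvalues i = a at *
  generalize l * hZ.1.eigenvalues j = b at *
  generalize tw hA.1 hZ.1 C i j = c
  have hab : a + b ≠ 0 := by linarith
  simp only [Complex.normSq_apply, Complex.sub_re, Complex.sub_im, Complex.re_ofReal_mul,
    Complex.im_ofReal_mul]
  field_simp
  ring

lemma comb_posDef {n : ℕ} {A₀ A₁ : Matrix (Fin n) (Fin n) ℂ} (h0 : A₀.PosDef) (h1 : A₁.PosDef)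
    {t : ℝ} (ht0 : 0 ≤ t) (ht1 : t ≤ 1) :
    (((1 - t : ℝ) : ℂ) • A₀ + ((t : ℝ) : ℂ) • A₁).PosDef := by
  rcases ht0.eq_or_lt with rfl | ht0
  · simpa using h0
  rcases ht1.eq_or_lt with rfl | ht1
  · simpa using h1
  · refine Matrix.PosDef.add (h0.smul ?_) (h1.smul ?_)
    · exact_mod_cast sub_pos.2 ht1
    · exact_mod_cast ht0

lemma qf_comb {n : ℕ} (l : ℝ) (C D A₀ A₁ Z₀ Z₁ : Matrix (Fin n) (Fin n) ℂ) (t : ℝ) :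
    qf l C D (((1 - t : ℝ) : ℂ) • A₀ + ((t : ℝ) : ℂ) • A₁)
      (((1 - t : ℝ) : ℂ) • Z₀ + ((t : ℝ) : ℂ) • Z₁) =
    (1 - t) * qf l C D A₀ Z₀ + t * qf l C D A₁ Z₁ := by
  simp only [qf, Matrix.mul_add, Matrix.add_mul, Matrix.mul_smul, Matrix.smul_mul,
    Matrix.trace_add, Matrix.trace_smul, Complex.add_re, smul_eq_mul, Complex.re_ofReal_mul]
  ring

lemma ps_concave {n : ℕ} {A₀ A₁ Z₀ Z₁ : Matrix (Fin n) (Fin n) ℂ}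
    (hA₀ : A₀.PosDef) (hA₁ : A₁.PosDef) (hZ₀ : Z₀.PosDef) (hZ₁ : Z₁.PosDef)
    {t : ℝ} (ht0 : 0 ≤ t) (ht1 : t ≤ 1) {l : ℝ} (hl : 0 < l) (C : Matrix (Fin n) (Fin n) ℂ) :
    (1 - t) * ps hA₀.1 hZ₀.1 l C + t * ps hA₁.1 hZ₁.1 l C ≤
      ps (comb_posDef hA₀ hA₁ ht0 ht1).1 (comb_posDef hZ₀ hZ₁ ht0 ht1).1 l C := by
  obtain ⟨D, hD⟩ := ps_attained (comb_posDef hA₀ hA₁ ht0 ht1) (comb_posDef hZ₀ hZ₁ ht0 ht1) hl C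
  rw [hD, qf_comb]
  have h0 := ps_le hA₀ hZ₀ hl C D
  have h1 := ps_le hA₁ hZ₁ hl C D
  have := mul_le_mul_of_nonneg_left h0 (sub_nonneg.2 ht1)
  have := mul_le_mul_of_nonneg_left h1 ht0
  linarith

open MeasureTheory Set Real in
lemma lieb_integral {n : ℕ} {A Z : Matrix (Fin n) (Fin n) ℂ} (hA : A.PosDef)
    (hZ : Z.PosDef) {q : ℝ} (hq : q ∈ Ioo (0 : ℝ) 1) (C : Matrix (Fin n) (Fin n) ℂ) :
    IntegrableOn (fun l => l ^ (q - 2) * ps hA.1 hZ.1 l C) (Ioi 0) ∧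
    ∫ l in Ioi 0, l ^ (q - 2) * ps hA.1 hZ.1 l C =
      (∫ l in Ioi 0, rpowIntegrand₀₁ q l 1) * (Cᴴ * mpow A q * C * mpow Z (1 - q)).trace.re := by
  have key : EqOn (fun l => ∑ i, ∑ j, rpowIntegrand₀₁ q l (hA.1.eigenvalues i / hZ.1.eigenvalues j) *
      (hZ.1.eigenvalues j * Complex.normSq (tw hA.1 hZ.1 C i j)))
      (fun l => l ^ (q - 2) * ps hA.1 hZ.1 l C) (Ioi 0) := by
    intro l hl
    have hl : 0 < l := hl
    simp only [ps]
    rw [Finset.mul_sum]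
    refine Finset.sum_congr rfl fun i _ => ?_
    rw [Finset.mul_sum]
    refine Finset.sum_congr rfl fun j _ => ?_
    have ha := hA.eigenvalues_pos i
    have hz := hZ.eigenvalues_pos j
    generalize hA.1.eigenvalues i = a at *
    generalize hZ.1.eigenvalues j = b at *
    generalize Complex.normSq (tw hA.1 hZ.1 C i j) = c
    rw [rpowIntegrand₀₁_eq_pow_div hq hl.le (by positivity), show q - 1 = (q - 2) + 1 by ring,
      Real.rpow_add hl, Real.rpow_one]
    have : a + l * b ≠ 0 := by positivity
    have : l + a / b ≠ 0 := by positivity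
    have : l * b + a ≠ 0 := by positivity
    field_simp
    ring
  have hint : ∀ i j, IntegrableOn (fun l => rpowIntegrand₀₁ q l
      (hA.1.eigenvalues i / hZ.1.eigenvalues j) *
      (hZ.1.eigenvalues j * Complex.normSq (tw hA.1 hZ.1 C i j))) (Ioi 0) := fun i j =>
    (integrableOn_rpowIntegrand₀₁_Ioi hq
      (div_pos (hA.eigenvalues_pos i) (hZ.eigenvalues_pos j)).le).mul_const _
  constructor
  · refine (integrableOn_congr_fun key measurableSet_Ioi).1 ?_
    exact integrable_finsetSum _ fun i _ => integrable_finsetSum _ fun j _ => hint i j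
  · rw [← setIntegral_congr_fun measurableSet_Ioi key,
      integral_finsetSum _ fun i _ => integrable_finsetSum _ fun j _ => hint i j,
      mpow, mpow, trace_formula hA.1 hZ.1, Finset.mul_sum]
    refine Finset.sum_congr rfl fun i _ => ?_
    rw [integral_finsetSum _ fun j _ => hint i j, Finset.mul_sum]
    refine Finset.sum_congr rfl fun j _ => ?_
    have ha := hA.eigenvalues_pos i
    have hz := hZ.eigenvalues_pos j
    rw [integral_mul_const, integral_rpowIntegrand₀₁_eq_rpow_mul_const hq (div_pos ha hz).le,
      Real.div_rpow ha.le hz.le, Real.rpow_sub hz, Real.rpow_one]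
    ring

open MeasureTheory Set Real in
/-- Lieb concavity. -/
lemma lieb {n : ℕ} {A₀ A₁ Z₀ Z₁ : Matrix (Fin n) (Fin n) ℂ}
    (hA₀ : A₀.PosDef) (hA₁ : A₁.PosDef) (hZ₀ : Z₀.PosDef) (hZ₁ : Z₁.PosDef)
    {t : ℝ} (ht0 : 0 ≤ t) (ht1 : t ≤ 1) {q : ℝ} (hq0 : 0 < q) (hq1 : q ≤ 1)
    (C : Matrix (Fin n) (Fin n) ℂ) :
    (1 - t) * (Cᴴ * mpow A₀ q * C * mpow Z₀ (1 - q)).trace.re +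
      t * (Cᴴ * mpow A₁ q * C * mpow Z₁ (1 - q)).trace.re ≤
      (Cᴴ * mpow (((1 - t : ℝ) : ℂ) • A₀ + ((t : ℝ) : ℂ) • A₁) q * C *
        mpow (((1 - t : ℝ) : ℂ) • Z₀ + ((t : ℝ) : ℂ) • Z₁) (1 - q)).trace.re := by
  have hA := comb_posDef hA₀ hA₁ ht0 ht1
  have hZ := comb_posDef hZ₀ hZ₁ ht0 ht1
  rcases hq1.eq_or_lt with rfl | hq1
  · rw [sub_self, mpow_zero' hZ₀.1, mpow_zero' hZ₁.1, mpow_zero' hZ.1, mpow_one' hA₀.1,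
      mpow_one' hA₁.1, mpow_one' hA.1]
    simp only [Matrix.mul_add, Matrix.add_mul, Matrix.mul_smul, Matrix.smul_mul,
      Matrix.trace_add, Matrix.trace_smul, Complex.add_re, smul_eq_mul, Complex.re_ofReal_mul,
      le_refl]
  · have hq : q ∈ Ioo (0 : ℝ) 1 := ⟨hq0, hq1⟩
    obtain ⟨i0, e0⟩ := lieb_integral hA₀ hZ₀ hq C
    obtain ⟨i1, e1⟩ := lieb_integral hA₁ hZ₁ hq C
    obtain ⟨i, e⟩ := lieb_integral hA hZ hq C
    have hK := integral_rpowIntegrand₀₁_one_pos hq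
    have hm : ∫ l in Ioi 0, ((1 - t) * (l ^ (q - 2) * ps hA₀.1 hZ₀.1 l C) +
        t * (l ^ (q - 2) * ps hA₁.1 hZ₁.1 l C)) ≤
        ∫ l in Ioi 0, l ^ (q - 2) * ps hA.1 hZ.1 l C := by
      refine setIntegral_mono_on ((i0.const_mul _).add (i1.const_mul _)) i measurableSet_Ioi ?_
      intro l hl
      have hl : 0 < l := hl
      have := mul_le_mul_of_nonneg_left (ps_concave hA₀ hA₁ hZ₀ hZ₁ ht0 ht1 hl C)
        (Real.rpow_pos_of_pos hl (q - 2)).le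
      linarith
    rw [integral_add (i0.const_mul _) (i1.const_mul _), integral_const_mul, integral_const_mul,
      e0, e1, e] at hm
    refine le_of_mul_le_mul_left ?_ hK
    linarith

lemma conj_posDef {n : ℕ} {B A : Matrix (Fin n) (Fin n) ℂ} (hB : IsUnit B) (hA : A.PosDef)
    (p : ℝ) : (Bᴴ * mpow A p * B).PosDef :=
  (mpow_posDef hA p).conjTranspose_mul_mul_same (Matrix.mulVec_injective_of_isUnit hB)

lemma mconj_inv {n : ℕ} {B A : Matrix (Fin n) (Fin n) ℂ} (hB : IsUnit B) (hA : A.PosDef)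
    (p : ℝ) : mpow (Bᴴ * mpow A p * B) (-1) = ((B⁻¹)ᴴ)ᴴ * mpow A (-p) * (B⁻¹)ᴴ := by
  have hX := conj_posDef hB hA p
  have h1 : (Bᴴ * mpow A p * B) * mpow (Bᴴ * mpow A p * B) (-1) = 1 := by
    have := mpow_mul hX 1 (-1)
    rw [mpow_one' hX.1] at this
    rw [this, add_neg_cancel, mpow_zero' hX.1]
  have hBd : IsUnit B.det := (Matrix.isUnit_iff_isUnit_det B).1 hB
  have hb : B * B⁻¹ = 1 := Matrix.mul_nonsing_inv B hBd
  have hb' : B⁻¹ * B = 1 := Matrix.nonsing_inv_mul B hBd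
  have hb2 : Bᴴ * (B⁻¹)ᴴ = 1 := by
    rw [← Matrix.conjTranspose_mul, hb', Matrix.conjTranspose_one]
  have hm : mpow A p * mpow A (-p) = 1 := by
    rw [mpow_mul hA, add_neg_cancel, mpow_zero' hA.1]
  have h2 : (Bᴴ * mpow A p * B) * (((B⁻¹)ᴴ)ᴴ * mpow A (-p) * (B⁻¹)ᴴ) = 1 := by
    rw [Matrix.conjTranspose_conjTranspose]
    calc _ = Bᴴ * (mpow A p * (B * B⁻¹) * mpow A (-p)) * (B⁻¹)ᴴ := by
          simp only [Matrix.mul_assoc]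
      _ = 1 := by rw [hb, Matrix.mul_one, hm, Matrix.mul_one, hb2]
  exact hX.isUnit.mul_left_cancel (h1.trans h2.symm)

theorem epstein_concavity_neg {n : ℕ} (B : Matrix (Fin n) (Fin n) ℂ) (hB : IsUnit B)
    (p : ℝ) (hp0 : -1 ≤ p) (hp1 : p < 0) (A₀ A₁ : Matrix (Fin n) (Fin n) ℂ)
    (hA₀ : A₀.PosDef) (hA₁ : A₁.PosDef) (t : ℝ) (ht0 : 0 ≤ t) (ht1 : t ≤ 1) :
    (1 - t) * (mpow (Bᴴ * mpow A₀ p * B) (1/p)).trace.re +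
        t * (mpow (Bᴴ * mpow A₁ p * B) (1/p)).trace.re ≤
      (mpow (Bᴴ * mpow (((1 - t : ℝ) : ℂ) • A₀ + ((t : ℝ) : ℂ) • A₁) p * B) (1/p)).trace.re := by
  have hp : p ≠ 0 := hp1.ne
  have hX₀ := conj_posDef hB hA₀ p
  have hX₁ := conj_posDef hB hA₁ p
  have hX := conj_posDef hB (comb_posDef hA₀ hA₁ ht0 ht1) p
  have hZ₀ := mpow_posDef hX₀ (1 / p)
  have hZ₁ := mpow_posDef hX₁ (1 / p)
  have hL := lieb hA₀ hA₁ hZ₀ hZ₁ ht0 ht1 (q := -p) (by linarith) (by linarith) (B⁻¹)ᴴ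
  rw [← mconj_inv hB hA₀, ← mconj_inv hB hA₁, ← mconj_inv hB (comb_posDef hA₀ hA₁ ht0 ht1),
    mpow_mpow hX₀, mpow_mpow hX₁, mpow_mul hX₀, mpow_mul hX₁, sub_neg_eq_add,
    show -1 + 1 / p * (1 + p) = 1 / p by field_simp; ring] at hL
  have hY := trace_young hX (comb_posDef hZ₀ hZ₁ ht0 ht1) p hp0 hp1
  have htr : (((1 - t : ℝ) : ℂ) • mpow (Bᴴ * mpow A₀ p * B) (1 / p) +
      ((t : ℝ) : ℂ) • mpow (Bᴴ * mpow A₁ p * B) (1 / p)).trace.re =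
      (1 - t) * (mpow (Bᴴ * mpow A₀ p * B) (1/p)).trace.re +
        t * (mpow (Bᴴ * mpow A₁ p * B) (1/p)).trace.re := by
    simp only [Matrix.trace_add, Matrix.trace_smul, Complex.add_re, smul_eq_mul,
      Complex.re_ofReal_mul]
  rw [htr] at hY
  have h := hL.trans hY
  refine le_of_mul_le_mul_left ?_ (neg_pos.2 hp1)
  linarith
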